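/- Let q ≥ 2 be an integer, 0 < H < 1 − 1/(2q), let c_{1,q,H} > 0 be the constant for which Z_n := V_n/(c_{1,q,H} √n) converges in law to N(0,1), and let N be a standard normal random variable. Then for every c > 0, (cε)² · Σ_{n≥1} [ P(|Z_n| > c ε √n) − P(|N| > c ε √n) ] converges to 0 as ε → 0⁺. -/

import Mathlib

open MeasureTheory ProbabilityTheory Filter Real Topology

/-- A (centered) fractional Brownian motion with Hurst parameter `H`:
all finite-dimensional distributions are centered Gaussian (equivalently, every finite
linear combination of values of the process is a centered real Gaussian), with covariance
`E (B s * B t) = (s^(2H) + t^(2H) - |t-s|^(2H)) / 2` for nonnegative times. -/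
structure IsFractionalBrownianMotion {Ω : Type*} [MeasureSpace Ω]
    (B : ℝ → Ω → ℝ) (H : ℝ) : Prop where
  measurable : ∀ t : ℝ, Measurable (B t)
  gaussian_fdd : ∀ (n : ℕ) (t : Fin n → ℝ), (∀ i, 0 ≤ t i) → ∀ c : Fin n → ℝ,
    ∃ v : NNReal,
      Measure.map (fun ω => ∑ i, c i * B (t i) ω) (ℙ : Measure Ω) = gaussianReal 0 v
  covariance : ∀ s t : ℝ, 0 ≤ s → 0 ≤ t →
    ∫ ω, B s ω * B t ω ∂(ℙ : Measure Ω)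
      = (s ^ (2 * H) + t ^ (2 * H) - |t - s| ^ (2 * H)) / 2

/-- `V_n = ∑_{k=0}^{n-1} H_q (n^H (B_{(k+1)/n} - B_{k/n}))`, where `H_q` is the Hermite
polynomial of degree `q`. -/
noncomputable def hermiteVariation {Ω : Type*} [MeasureSpace Ω]
    (B : ℝ → Ω → ℝ) (H : ℝ) (q n : ℕ) (ω : Ω) : ℝ :=
  ∑ k ∈ Finset.range n,
    Polynomial.aeval
      ((n : ℝ) ^ H * (B (((k : ℝ) + 1) / n) ω - B ((k : ℝ) / n) ω))
      (Polynomial.hermite q)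

/-- Convergence in distribution of a sequence of real random variables to a law `μ`. -/
def TendstoInDistribution {Ω : Type*} [MeasureSpace Ω]
    (Z : ℕ → Ω → ℝ) (μ : Measure ℝ) : Prop :=
  ∀ f : BoundedContinuousFunction ℝ ℝ,
    Tendsto (fun n => ∫ ω, f (Z n ω) ∂(ℙ : Measure Ω)) atTop (𝓝 (∫ x, f x ∂μ))

/-!
Gaussian integration by parts lowers a mixed Hermite moment `E ∏ H_{α i}(X i)` by one degree in two
of the variables at a time, at the cost of a factor `cov (X i, X j)` with `i ≠ j`. Hence, if
`|cov (X i, X j)| ≤ w i * w j` for `i ≠ j`, the moment is at most a constant times `∏ w i ^ α i`.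
For four variables, a symmetric positive matrix `r` can be dominated off the diagonal by such
products with `w 0 * w 1 * w 2 * w 3` equal to the largest of `r 0 1 * r 2 3`, `r 0 2 * r 1 3` and
`r 0 3 * r 1 2`. Expanding the fourth power, `E (V_n ^ 4) ≤ C (∑_{k, l < n} |ρ (k - l)| ^ q) ^ 2`,
where the covariance `ρ` of fractional Gaussian noise is `O(|z| ^ (2 H - 2))`; this is `O(n ^ 2)`
because `H < 1 - 1 / (2 q)` makes `|ρ| ^ q` summable. By Markov's inequality the tails of `Z_n` are
at most `C / (1 + t ^ 4)`, uniformly in `n`.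

With `h = (c ε) ^ 2`, the quantity to bound is a Riemann sum of mesh `h` dominated by the integrable
function `2 C / (1 + x ^ 2)`. Convergence in law to an atomless limit makes the tails of `Z_n`
converge uniformly in the level, so for each fixed `x > 0` the summand at `n ≈ x / h` tends to `0`,
and dominated convergence applies.
-/

section FiniteMoments

variable {Ω : Type*} [MeasurableSpace Ω] {P : Measure Ω} [IsFiniteMeasure P] {f : Ω → ℝ}

variable (P) in
/-- The algebra of functions all of whose absolute moments under `P` are finite. -/
def finiteMoments : Subalgebra ℝ (Ω → ℝ) where
  carrier := {f | ∀ n : ℕ, MemLp f n P}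
  mul_mem' {f g} hf hg n := by
    have : ENNReal.HolderTriple ((2 * n : ℕ) : ENNReal) ((2 * n : ℕ) : ENNReal) n := by
      constructor
      push_cast
      rw [ENNReal.mul_inv (by simp) (by simp), ← add_mul, ENNReal.inv_two_add_inv_two, one_mul]
    exact (hg (2 * n)).mul (hf (2 * n))
  add_mem' hf hg n := (hf n).add (hg n)
  algebraMap_mem' c _ := memLp_const c

theorem integrable_of_mem_finiteMoments (hf : f ∈ finiteMoments P) : Integrable f P :=
  memLp_one_iff_integrable.1 (by simpa using hf 1)

theorem mem_finiteMoments_of_hasGaussianLaw (hf : HasGaussianLaw f P) :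
    f ∈ finiteMoments P :=
  fun n => hf.memLp (by simp)

theorem eval_comp_mem_finiteMoments (hf : f ∈ finiteMoments P) (p : Polynomial ℝ) :
    (fun ω => p.eval (f ω)) ∈ finiteMoments P := by
  have h := Polynomial.aeval_mem_adjoin_singleton ℝ f (p := p)
  have h' := Algebra.adjoin_le (Set.singleton_subset_iff.2 hf) h
  convert h' using 1
  ext ω
  simp [Polynomial.aeval_fn_apply]

theorem prod_eval_mem_finiteMoments {ι : Type*} {X : ι → Ω → ℝ}
    (hX : ∀ i, X i ∈ finiteMoments P) (s : Finset ι) (f : ι → Polynomial ℝ) :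
    (fun ω => ∏ i ∈ s, (f i).eval (X i ω)) ∈ finiteMoments P := by
  simpa only [Finset.prod_fn] using
    Subalgebra.prod_mem _ fun i _ => eval_comp_mem_finiteMoments (hX i) (f i)

end FiniteMoments

section MultiIndex

variable {ι M : Type*} [DecidableEq ι]

theorem exists_eq_add_single {α : ι → ℕ} {i : ι} (hi : α i ≠ 0) :
    ∃ β : ι → ℕ, α = β + Pi.single i 1 := by
  refine ⟨α - Pi.single i 1, (tsub_add_cancel_of_le fun j => ?_).symm⟩
  obtain rfl | hj := eq_or_ne j i
  · simpa [Nat.one_le_iff_ne_zero] using hi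
  · simp [hj]

variable [Fintype ι]

theorem prod_eq_mul_prod_erase [CommMonoid M] {f g : ι → M} (i : ι) (h : ∀ j ≠ i, f j = g j) :
    ∏ j, f j = f i * ∏ j ∈ Finset.univ.erase i, g j := by
  rw [← Finset.mul_prod_erase _ f (Finset.mem_univ i),
    Finset.prod_congr rfl fun j hj => h j (Finset.ne_of_mem_erase hj)]

theorem prod_pow_add_single [CommMonoid M] (w : ι → M) (α : ι → ℕ) (i : ι) :
    ∏ j, w j ^ (α + Pi.single i 1 : ι → ℕ) j = w i * ∏ j, w j ^ α j := by
  rw [prod_eq_mul_prod_erase i (g := fun j => w j ^ α j) fun j hj => by simp [hj],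
    ← Finset.mul_prod_erase _ (fun j => w j ^ α j) (Finset.mem_univ i), ← mul_assoc]
  simp [pow_succ']

theorem mul_factorial_mul_prod_pow_sub_single_le {w : ι → ℝ} (hw : ∀ i, 0 ≤ w i) (α : ι → ℕ)
    (i : ι) :
    α i * (w i * ((∑ j, (α - Pi.single i 1 : ι → ℕ) j).factorial *
        ∏ j, w j ^ (α - Pi.single i 1 : ι → ℕ) j)) ≤
      α i * ((∑ j, α j).factorial * ∏ j, w j ^ α j) := by
  obtain hi | hi := eq_or_ne (α i) 0
  · simp [hi]
  obtain ⟨β, rfl⟩ := exists_eq_add_single hi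
  have hprod : 0 ≤ ∏ j, w j ^ β j := Finset.prod_nonneg fun j _ => pow_nonneg (hw j) _
  have hle : ∑ j, β j ≤ ∑ j, (β + Pi.single i 1 : ι → ℕ) j :=
    Finset.sum_le_sum fun j _ => Nat.le_add_right _ _
  rw [add_tsub_cancel_right, prod_pow_add_single, mul_left_comm (w i)]
  have := hw i
  gcongr

end MultiIndex

section HermitePolynomials

open Polynomial

theorem integrable_eval_gaussianReal (p : ℝ[X]) (m : ℝ) (v : NNReal) :
    Integrable (fun x => p.eval x) (gaussianReal m v) :=
  integrable_of_mem_finiteMoments (eval_comp_mem_finiteMoments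
    (mem_finiteMoments_of_hasGaussianLaw IsGaussian.hasGaussianLaw_id) p)

theorem hasDerivAt_gaussianPDFReal (m : ℝ) (v : NNReal) (x : ℝ) :
    HasDerivAt (gaussianPDFReal m v) (-((x - m) / v) * gaussianPDFReal m v x) x := by
  have hexp : HasDerivAt (fun x : ℝ => -(x - m) ^ 2 / (2 * (v : ℝ))) (-((x - m) / v)) x := by
    convert! ((((hasDerivAt_id x).sub_const m).pow 2).neg.div_const (2 * (v : ℝ))) using 1
    simp only [id_eq, Nat.cast_ofNat, mul_one, Nat.add_one_sub_one, pow_one]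
    ring
  rw [gaussianPDFReal_def]
  convert! hexp.exp.const_mul (√(2 * π * v))⁻¹ using 1
  ring

theorem integral_mul_eval_gaussianReal (p : ℝ[X]) :
    ∫ x, x * p.eval x ∂gaussianReal 0 1 = ∫ x, p.derivative.eval x ∂gaussianReal 0 1 := by
  have hint (r : ℝ[X]) : Integrable fun x => gaussianPDFReal 0 1 x * r.eval x := by
    have h := integrable_eval_gaussianReal r 0 1
    rw [gaussianReal_of_var_ne_zero _ one_ne_zero, integrable_withDensity_iff_integrable_smul'
      (measurable_gaussianPDF _ _) (ae_of_all _ fun _ => gaussianPDF_lt_top)] at h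
    simpa using h
  have hderiv (x : ℝ) : HasDerivAt (fun x => gaussianPDFReal 0 1 x * p.eval x)
      (gaussianPDFReal 0 1 x * (derivative p - X * p).eval x) x := by
    convert! (hasDerivAt_gaussianPDFReal 0 1 x).mul (p.hasDerivAt x) using 1
    simp only [eval_sub, eval_mul, eval_X, NNReal.coe_one]
    ring
  have hzero := integral_eq_zero_of_hasDerivAt_of_integrable hderiv (hint _) (hint p)
  simp only [eval_sub, mul_sub] at hzero
  rw [integral_sub (hint _) (hint _), sub_eq_zero] at hzero
  simpa [integral_gaussianReal_eq_integral_smul] using hzero.symm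

/-- The probabilists' Hermite polynomial with real coefficients. -/
noncomputable def hermiteReal (n : ℕ) : ℝ[X] := (hermite n).map (Int.castRingHom ℝ)

theorem hermiteReal_zero : hermiteReal 0 = 1 := by simp [hermiteReal]

theorem hermiteReal_succ (n : ℕ) :
    hermiteReal (n + 1) = X * hermiteReal n - derivative (hermiteReal n) := by
  simp [hermiteReal, hermite_succ, derivative_map]

theorem derivative_hermiteReal (n : ℕ) :
    derivative (hermiteReal n) = (n : ℝ[X]) * hermiteReal (n - 1) := by
  induction n with
  | zero => simp [hermiteReal_zero]
  | succ n ih =>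
    rw [hermiteReal_succ, derivative_sub, derivative_mul, ih]
    cases n with
    | zero => simp
    | succ n =>
      simp only [derivative_X, derivative_mul, derivative_natCast, Nat.add_sub_cancel, zero_mul,
        zero_add, hermiteReal_succ n]
      push_cast
      ring

theorem eval_hermiteReal (n : ℕ) (x : ℝ) : (hermiteReal n).eval x = aeval x (hermite n) := by
  rw [hermiteReal, eval_map, aeval_def, Subsingleton.elim (Int.castRingHom ℝ) (algebraMap ℤ ℝ)]

variable {ι : Type*} [Fintype ι] [DecidableEq ι]

theorem prod_eval_hermiteReal_add_single (α : ι → ℕ) (i : ι) (x : ι → ℝ) :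
    ∏ j, (hermiteReal ((α + Pi.single i 1 : ι → ℕ) j)).eval (x j) =
      x i * ∏ j, (hermiteReal (α j)).eval (x j) - (derivative (hermiteReal (α i))).eval (x i) *
        ∏ j ∈ Finset.univ.erase i, (hermiteReal (α j)).eval (x j) := by
  rw [prod_eq_mul_prod_erase i (g := fun j => (hermiteReal (α j)).eval (x j)) fun k hk => by
      simp [hk],
    ← Finset.mul_prod_erase _ (fun j => (hermiteReal (α j)).eval (x j)) (Finset.mem_univ i)]
  simp only [Pi.add_apply, Pi.single_eq_same, hermiteReal_succ, eval_sub, eval_mul, eval_X]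
  ring

theorem eval_derivative_hermiteReal_mul_prod_erase (α : ι → ℕ) (i : ι) (x : ι → ℝ) :
    (derivative (hermiteReal (α i))).eval (x i) *
        ∏ j ∈ Finset.univ.erase i, (hermiteReal (α j)).eval (x j) =
      α i * ∏ j, (hermiteReal ((α - Pi.single i 1 : ι → ℕ) j)).eval (x j) := by
  rw [prod_eq_mul_prod_erase i (g := fun j => (hermiteReal (α j)).eval (x j)) fun k hk => by
    simp [hk]]
  simp [derivative_hermiteReal, mul_assoc]

end HermitePolynomials

section FourPoints

theorem exists_weights_of_dominant {r : Fin 4 → Fin 4 → ℝ} (hr_pos : ∀ i j, 0 < r i j)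
    (hr_symm : ∀ i j, r i j = r j i) (h₁ : r 0 2 * r 1 3 ≤ r 0 1 * r 2 3)
    (h₂ : r 0 3 * r 1 2 ≤ r 0 1 * r 2 3) :
    ∃ w : Fin 4 → ℝ, (∀ i, 0 < w i) ∧ (∀ i j, i ≠ j → r i j ≤ w i * w j) ∧
      ∏ i, w i = r 0 1 * r 2 3 := by
  have h01 := hr_pos 0 1
  have h02 := hr_pos 0 2
  have h03 := hr_pos 0 3
  have h23 := hr_pos 2 3
  obtain ⟨s, hs, hs_sq⟩ : ∃ s, 0 < s ∧ s ^ 2 = r 0 2 * r 0 3 / r 2 3 :=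
    ⟨√(r 0 2 * r 0 3 / r 2 3), by positivity, Real.sq_sqrt (by positivity)⟩
  have hdiv (a b : ℝ) : a / s * (b / s) = a * b * r 2 3 / (r 0 2 * r 0 3) := by
    rw [div_mul_div_comm, ← pow_two, hs_sq, div_div_eq_mul_div]
  have hfst (a : ℝ) : s * (a / s) = a := mul_div_cancel₀ a hs.ne'
  have h12 : r 1 2 ≤ r 0 1 / s * (r 0 2 / s) := by
    rw [hdiv, le_div_iff₀ (by positivity)]
    nlinarith
  have h13 : r 1 3 ≤ r 0 1 / s * (r 0 3 / s) := by
    rw [hdiv, le_div_iff₀ (by positivity)]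
    nlinarith
  have h23' : r 2 3 = r 0 2 / s * (r 0 3 / s) := by
    rw [hdiv]
    field_simp
  have hlt : ∀ i j : Fin 4, i < j → r i j ≤
      (![s, r 0 1 / s, r 0 2 / s, r 0 3 / s] : Fin 4 → ℝ) i *
        (![s, r 0 1 / s, r 0 2 / s, r 0 3 / s] : Fin 4 → ℝ) j := by
    simp [Fin.forall_fin_succ, hfst, h12, h13, ← h23']
  refine ⟨![s, r 0 1 / s, r 0 2 / s, r 0 3 / s], ?_, fun i j hij => ?_, ?_⟩
  · intro i
    fin_cases i <;> simp only [Fin.zero_eta, Fin.mk_one, Fin.reduceFinMk, Matrix.cons_val] <;>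
      positivity
  · obtain h | h := lt_or_gt_of_ne hij
    · exact hlt i j h
    · rw [hr_symm, mul_comm]
      exact hlt j i h
  · simp only [Fin.prod_univ_four, Matrix.cons_val]
    rw [mul_assoc, ← h23', hfst]

theorem sum_three_pairings {ι R : Type*} [CommSemiring R] (s : Finset ι) (a : ι → ι → R) :
    ∑ z ∈ (s ×ˢ s) ×ˢ (s ×ˢ s), (a z.1.1 z.1.2 * a z.2.1 z.2.2 + a z.1.1 z.2.1 * a z.1.2 z.2.2 +
      a z.1.1 z.2.2 * a z.1.2 z.2.1) = 3 * (∑ i ∈ s, ∑ j ∈ s, a i j) ^ 2 := by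
  have h₁ : ∑ i ∈ s, ∑ j ∈ s, ∑ k ∈ s, ∑ l ∈ s, a i j * a k l =
      (∑ i ∈ s, ∑ j ∈ s, a i j) ^ 2 := by
    simp only [← Finset.mul_sum, ← Finset.sum_mul, pow_two]
  have h₂ : ∑ i ∈ s, ∑ j ∈ s, ∑ k ∈ s, ∑ l ∈ s, a i k * a j l =
      (∑ i ∈ s, ∑ j ∈ s, a i j) ^ 2 :=
    (Finset.sum_congr rfl fun i _ => Finset.sum_comm).trans h₁
  have h₃ : ∑ i ∈ s, ∑ j ∈ s, ∑ k ∈ s, ∑ l ∈ s, a i l * a j k =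
      (∑ i ∈ s, ∑ j ∈ s, a i j) ^ 2 :=
    (Finset.sum_congr rfl fun i _ => Finset.sum_congr rfl fun j _ => Finset.sum_comm).trans h₂
  simp only [Finset.sum_product, Finset.sum_add_distrib, h₁, h₂, h₃]
  ring

end FourPoints

section GaussianFamily

theorem integral_comp_prodMk_of_indepFun {Ω α β E : Type*} [MeasurableSpace Ω] [MeasurableSpace α]
    [MeasurableSpace β] [NormedAddCommGroup E] [NormedSpace ℝ E] {P : Measure Ω}
    [IsFiniteMeasure P] {X : Ω → α} {Y : Ω → β} (h : IndepFun X Y P) (hX : AEMeasurable X P)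
    (hY : AEMeasurable Y P) {g : α × β → E}
    (hg : AEStronglyMeasurable g ((P.map X).prod (P.map Y)))
    (hint : Integrable (fun ω => g (X ω, Y ω)) P) :
    ∫ ω, g (X ω, Y ω) ∂P = ∫ y, ∫ x, g (x, y) ∂P.map X ∂P.map Y := by
  have hmap := (indepFun_iff_map_prod_eq_prod_map_map hX hY).1 h
  rw [← hmap] at hg
  have hint_map := (integrable_map_measure hg (hX.prodMk hY)).2 hint
  rw [← integral_map (hX.prodMk hY) hg, hmap, integral_prod_symm _ (hmap ▸ hint_map)]

/-- A Gaussian process each of whose values is standard normal. -/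
structure IsStdGaussianFamily {Ω ι : Type*} [MeasurableSpace Ω] (X : ι → Ω → ℝ)
    (P : Measure Ω) : Prop where
  isGaussianProcess : IsGaussianProcess X P
  hasLaw : ∀ i, HasLaw (X i) (gaussianReal 0 1) P

namespace IsStdGaussianFamily

variable {Ω ι κ : Type*} [MeasurableSpace Ω] {X : ι → Ω → ℝ} {P : Measure Ω}

theorem comp (hX : IsStdGaussianFamily X P) (e : κ → ι) :
    IsStdGaussianFamily (fun k => X (e k)) P where
  isGaussianProcess := hX.isGaussianProcess.comp_right e
  hasLaw k := hX.hasLaw (e k)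

theorem covariance_self (hX : IsStdGaussianFamily X P) (i : ι) : cov[X i, X i; P] = 1 := by
  rw [ProbabilityTheory.covariance_self (hX.hasLaw i).aemeasurable, (hX.hasLaw i).variance_eq,
    variance_id_gaussianReal, NNReal.coe_one]

variable (X P) in
/-- The residuals of the linear regression of a family of unit-variance variables on `X i`. -/
noncomputable def residual (i : ι) (ω : Ω) (j : ι) : ℝ := X j ω - cov[X i, X j; P] * X i ω

theorem add_residual (i : ι) (ω : Ω) (j : ι) :
    cov[X i, X j; P] * X i ω + residual X P i ω j = X j ω := by
  simp [residual]

variable [IsProbabilityMeasure P]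

theorem mem_finiteMoments (hX : IsStdGaussianFamily X P) (i : ι) : X i ∈ finiteMoments P :=
  mem_finiteMoments_of_hasGaussianLaw (hX.isGaussianProcess.hasGaussianLaw_eval i)

theorem indepFun_residual (hX : IsStdGaussianFamily X P) (i : ι) :
    IndepFun (X i) (residual X P i) P := by
  have hjoint : IsGaussianProcess (Sum.elim (fun _ : Unit => X i)
      (fun j ω => X j ω - cov[X i, X j; P] * X i ω)) P := by
    classical
    refine hX.isGaussianProcess.of_isGaussianProcess ?_
    rintro (_ | j)
    · exact ⟨{i}, ContinuousLinearMap.proj ⟨i, by simp⟩, fun ω => by simp⟩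
    · exact ⟨{i, j}, ContinuousLinearMap.proj ⟨j, by simp⟩
        - cov[X i, X j; P] • ContinuousLinearMap.proj ⟨i, by simp⟩, fun ω => by simp⟩
  have hX2 (j : ι) : MemLp (X j) 2 P := hX.mem_finiteMoments j 2
  have haemeas (j : ι) : AEMeasurable (X j) P := (hX.hasLaw j).aemeasurable
  have hindep := hjoint.indepFun_of_covariance_eq_zero (fun _ => haemeas i)
    (fun j => (haemeas j).sub ((haemeas i).const_mul _)) fun _ j => by
      rw [covariance_fun_sub_right (hX2 i) (hX2 j) ((hX2 i).const_mul _),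
        covariance_const_mul_right, hX.covariance_self, mul_one, sub_self]
  exact hindep.comp (φ := fun f : Unit → ℝ => f ()) (ψ := id) (by fun_prop) measurable_id

open Polynomial in
/-- Conditionally on the residuals, this is integration by parts in one dimension. -/
theorem integral_mul_eval_residual [Countable ι] (hX : IsStdGaussianFamily X P) (i : ι)
    {F : (ι → ℝ) → ℝ[X]}
    (hF : Measurable fun z : ℝ × (ι → ℝ) => (F z.2).eval z.1)
    (hF' : Measurable fun z : ℝ × (ι → ℝ) => (derivative (F z.2)).eval z.1)
    (hint : Integrable (fun ω => X i ω * (F (residual X P i ω)).eval (X i ω)) P)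
    (hint' : Integrable (fun ω => (derivative (F (residual X P i ω))).eval (X i ω)) P) :
    ∫ ω, X i ω * (F (residual X P i ω)).eval (X i ω) ∂P =
      ∫ ω, (derivative (F (residual X P i ω))).eval (X i ω) ∂P := by
  have condition {g : ℝ × (ι → ℝ) → ℝ} (hg : Measurable g)
      (hint : Integrable (fun ω => g (X i ω, residual X P i ω)) P) :
      ∫ ω, g (X i ω, residual X P i ω) ∂P =
        ∫ y, ∫ x, g (x, y) ∂gaussianReal 0 1 ∂P.map (residual X P i) := by
    have haemeas (j : ι) : AEMeasurable (X j) P := (hX.hasLaw j).aemeasurable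
    have hres : AEMeasurable (residual X P i) P :=
      aemeasurable_pi_lambda _ fun j => (haemeas j).sub ((haemeas i).const_mul _)
    rw [← (hX.hasLaw i).map_eq]
    exact integral_comp_prodMk_of_indepFun (hX.indepFun_residual i) (haemeas i) hres
      hg.aestronglyMeasurable hint
  rw [condition (g := fun z => z.1 * (F z.2).eval z.1) (measurable_fst.mul hF) hint,
    condition (g := fun z => (derivative (F z.2)).eval z.1) hF' hint']
  simp only [integral_mul_eval_gaussianReal]

open Polynomial in
theorem integral_mul_prod_eval [Fintype ι] [DecidableEq ι] (hX : IsStdGaussianFamily X P) (i : ι)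
    (f : ι → ℝ[X]) :
    ∫ ω, X i ω * ∏ j, (f j).eval (X j ω) ∂P =
      ∑ j, cov[X i, X j; P] *
        ∫ ω, (derivative (f j)).eval (X j ω) *
          ∏ k ∈ Finset.univ.erase j, (f k).eval (X k ω) ∂P := by
  let F : (ι → ℝ) → ℝ[X] := fun y => ∏ j, (f j).comp (C cov[X i, X j; P] * Polynomial.X + C (y j))
  have hF (x : ℝ) (y : ι → ℝ) :
      (F y).eval x = ∏ j, (f j).eval (cov[X i, X j; P] * x + y j) := by
    simp [F, eval_prod]
  have hF' (x : ℝ) (y : ι → ℝ) : (derivative (F y)).eval x = ∑ j, cov[X i, X j; P] *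
      ((derivative (f j)).eval (cov[X i, X j; P] * x + y j) *
        ∏ k ∈ Finset.univ.erase j, (f k).eval (cov[X i, X k; P] * x + y k)) := by
    simp only [F, derivative_prod_finset, derivative_comp, eval_finsetSum, eval_mul, eval_prod,
      eval_comp, eval_add, eval_C, eval_X, derivative_add, derivative_mul, derivative_C,
      derivative_X, zero_mul, zero_add, mul_one, add_zero]
    exact Finset.sum_congr rfl fun j _ => by ring
  have hterm (j : ι) : Integrable (fun ω => cov[X i, X j; P] * ((derivative (f j)).eval (X j ω) *
      ∏ k ∈ Finset.univ.erase j, (f k).eval (X k ω))) P :=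
    (integrable_of_mem_finiteMoments <| mul_mem
      (eval_comp_mem_finiteMoments (hX.mem_finiteMoments j) _)
      (prod_eval_mem_finiteMoments hX.mem_finiteMoments _ f)).const_mul _
  have hibp := hX.integral_mul_eval_residual i (F := F) (by simp only [hF]; fun_prop)
    (by simp only [hF']; fun_prop)
    (by
      simp only [hF, add_residual]
      exact integrable_of_mem_finiteMoments <| mul_mem (hX.mem_finiteMoments i)
        (prod_eval_mem_finiteMoments hX.mem_finiteMoments _ f))
    (by
      simp only [hF', add_residual]
      exact integrable_finsetSum _ fun j _ => hterm j)
  simp only [hF, hF', add_residual] at hibp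
  rw [hibp, integral_finsetSum _ fun j _ => hterm j]
  simp only [integral_const_mul]

variable (X P) in
/-- The mixed moment `E ∏ i, H_{α i}(X i)` of Hermite polynomials of the variables of a family. -/
noncomputable def hermiteMoment [Fintype ι] (α : ι → ℕ) : ℝ :=
  ∫ ω, ∏ i, (hermiteReal (α i)).eval (X i ω) ∂P

/-- The term `j = i` of the integration by parts is cancelled by the derivative in
`H_{n+1} = x H_n - H_n'`. -/
theorem hermiteMoment_add_single [Fintype ι] [DecidableEq ι] (hX : IsStdGaussianFamily X P)
    (α : ι → ℕ) (i : ι) :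
    hermiteMoment X P (α + Pi.single i 1) = ∑ j ∈ Finset.univ.erase i,
      α j * cov[X i, X j; P] * hermiteMoment X P (α - Pi.single j 1) := by
  let D (j : ι) (ω : Ω) : ℝ := (Polynomial.derivative (hermiteReal (α j))).eval (X j ω) *
    ∏ k ∈ Finset.univ.erase j, (hermiteReal (α k)).eval (X k ω)
  have hDint : Integrable (D i) P := integrable_of_mem_finiteMoments <| mul_mem
    (eval_comp_mem_finiteMoments (hX.mem_finiteMoments i) _)
    (prod_eval_mem_finiteMoments hX.mem_finiteMoments _ _)
  have hint : Integrable (fun ω => X i ω * ∏ j, (hermiteReal (α j)).eval (X j ω)) P :=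
    integrable_of_mem_finiteMoments <| mul_mem (hX.mem_finiteMoments i)
      (prod_eval_mem_finiteMoments hX.mem_finiteMoments _ _)
  have hD (j : ι) : ∫ ω, D j ω ∂P = α j * hermiteMoment X P (α - Pi.single j 1) := by
    rw [hermiteMoment, ← integral_const_mul]
    exact integral_congr_ae (ae_of_all _ fun ω =>
      eval_derivative_hermiteReal_mul_prod_erase α j fun k => X k ω)
  have hibp := hX.integral_mul_prod_eval i fun j => hermiteReal (α j)
  rw [← Finset.add_sum_erase _ _ (Finset.mem_univ i), hX.covariance_self, one_mul] at hibp
  calc hermiteMoment X P (α + Pi.single i 1)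
      = ∫ ω, (X i ω * ∏ j, (hermiteReal (α j)).eval (X j ω) - D i ω) ∂P :=
        integral_congr_ae (ae_of_all _ fun ω =>
          prod_eval_hermiteReal_add_single α i fun k => X k ω)
    _ = ∑ j ∈ Finset.univ.erase i, cov[X i, X j; P] * ∫ ω, D j ω ∂P := by
        rw [integral_sub hint hDint, hibp, add_sub_cancel_left]
    _ = _ := Finset.sum_congr rfl fun j _ => by rw [hD j]; ring

theorem abs_hermiteMoment_add_single_le [Fintype ι] [DecidableEq ι]
    (hX : IsStdGaussianFamily X P) {w : ι → ℝ} (hw : ∀ i, 0 ≤ w i)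
    (hcov : ∀ i j, i ≠ j → |cov[X i, X j; P]| ≤ w i * w j) {α : ι → ℕ} (i : ι)
    (hα : ∀ j, |hermiteMoment X P (α - Pi.single j 1)| ≤
      (∑ k, (α - Pi.single j 1 : ι → ℕ) k).factorial *
        ∏ k, w k ^ (α - Pi.single j 1 : ι → ℕ) k) :
    |hermiteMoment X P (α + Pi.single i 1)| ≤ (∑ k, (α + Pi.single i 1 : ι → ℕ) k).factorial *
      ∏ k, w k ^ (α + Pi.single i 1 : ι → ℕ) k := by
  let bound (γ : ι → ℕ) : ℝ := (∑ j, γ j).factorial * ∏ j, w j ^ γ j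
  have hbound_nonneg : 0 ≤ bound α :=
    mul_nonneg (Nat.cast_nonneg _) (Finset.prod_nonneg fun j _ => pow_nonneg (hw j) _)
  have hterm (j : ι) (hj : j ≠ i) :
      |α j * cov[X i, X j; P] * hermiteMoment X P (α - Pi.single j 1)| ≤
        w i * (α j * bound α) :=
    calc |α j * cov[X i, X j; P] * hermiteMoment X P (α - Pi.single j 1)|
        = α j * (|cov[X i, X j; P]| * |hermiteMoment X P (α - Pi.single j 1)|) := by
          rw [abs_mul, abs_mul, Nat.abs_cast, mul_assoc]
      _ ≤ α j * (w i * w j * bound (α - Pi.single j 1)) := by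
          gcongr
          exacts [mul_nonneg (hw i) (hw j), hcov i j hj.symm, hα j]
      _ = w i * (α j * (w j * bound (α - Pi.single j 1))) := by ring
      _ ≤ w i * (α j * bound α) := mul_le_mul_of_nonneg_left
          (mul_factorial_mul_prod_pow_sub_single_le hw α j) (hw i)
  have hsum : ∑ k, (α + Pi.single i 1 : ι → ℕ) k = ∑ k, α k + 1 := by
    simp [Finset.sum_add_distrib]
  calc |hermiteMoment X P (α + Pi.single i 1)|
      ≤ ∑ j ∈ Finset.univ.erase i, w i * (α j * bound α) := by
        rw [hX.hermiteMoment_add_single]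
        exact (Finset.abs_sum_le_sum_abs _ _).trans
          (Finset.sum_le_sum fun j hj => hterm j (Finset.ne_of_mem_erase hj))
    _ ≤ ∑ j, w i * (α j * bound α) :=
        Finset.sum_le_sum_of_subset_of_nonneg (Finset.erase_subset _ _) fun j _ _ =>
          mul_nonneg (hw i) (by positivity)
    _ = w i * (∑ j, α j : ℕ) * bound α := by
        rw [← Finset.mul_sum, ← Finset.sum_mul, Nat.cast_sum, mul_assoc]
    _ ≤ w i * (∑ j, α j + 1 : ℕ) * bound α := by
        have := hw i
        gcongr
        exact Nat.le_succ _
    _ = _ := by rw [prod_pow_add_single, hsum, Nat.factorial_succ, Nat.cast_mul]; ring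

theorem abs_hermiteMoment_le [Fintype ι] (hX : IsStdGaussianFamily X P) {w : ι → ℝ}
    (hw : ∀ i, 0 ≤ w i) (hcov : ∀ i j, i ≠ j → |cov[X i, X j; P]| ≤ w i * w j) (α : ι → ℕ) :
    |hermiteMoment X P α| ≤ (∑ i, α i).factorial * ∏ i, w i ^ α i := by
  classical
  induction hn : ∑ i, α i using Nat.strong_induction_on generalizing α with
  | _ n ih =>
  obtain hα | ⟨i, hi⟩ : α = 0 ∨ ∃ i, α i ≠ 0 := or_iff_not_imp_left.2 Function.ne_iff.1
  · simp [hermiteMoment, hermiteReal_zero, ← hn, hα]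
  obtain ⟨β, rfl⟩ := exists_eq_add_single hi
  rw [← hn]
  refine hX.abs_hermiteMoment_add_single_le hw hcov i fun j => ih _ ?_ _ rfl
  calc ∑ k, (β - Pi.single j 1 : ι → ℕ) k
      ≤ ∑ k, β k := Finset.sum_le_sum fun k _ => Nat.sub_le _ _
    _ < n := by simp [← hn, Finset.sum_add_distrib]

variable {Y : Fin 4 → Ω → ℝ}

theorem hermiteMoment_const_comp_equiv [Fintype ι] [Fintype κ] (X : ι → Ω → ℝ) (P : Measure Ω)
    (e : κ ≃ ι) (q : ℕ) :
    hermiteMoment (fun k => X (e k)) P (fun _ => q) = hermiteMoment X P (fun _ => q) :=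
  integral_congr_ae (ae_of_all _ fun ω => e.prod_comp fun i => (hermiteReal q).eval (X i ω))

theorem abs_hermiteMoment_const_le_of_dominant (hY : IsStdGaussianFamily Y P)
    {r : Fin 4 → Fin 4 → ℝ} (hr_pos : ∀ i j, 0 < r i j) (hr_symm : ∀ i j, r i j = r j i)
    (hcov : ∀ i j, |cov[Y i, Y j; P]| ≤ r i j)
    (h₁ : r 0 2 * r 1 3 ≤ r 0 1 * r 2 3) (h₂ : r 0 3 * r 1 2 ≤ r 0 1 * r 2 3) (q : ℕ) :
    |hermiteMoment Y P fun _ => q| ≤ (4 * q).factorial * (r 0 1 * r 2 3) ^ q := by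
  obtain ⟨w, hw_pos, hw, hw_prod⟩ := exists_weights_of_dominant hr_pos hr_symm h₁ h₂
  have h := hY.abs_hermiteMoment_le (fun i => (hw_pos i).le)
    (fun i j hij => (hcov i j).trans (hw i j hij)) fun _ => q
  rwa [Finset.prod_pow, hw_prod, Finset.sum_const, Finset.card_univ, Fintype.card_fin,
    smul_eq_mul] at h

theorem abs_hermiteMoment_const_le_of_pos (hY : IsStdGaussianFamily Y P)
    {r : Fin 4 → Fin 4 → ℝ} (hr_pos : ∀ i j, 0 < r i j) (hr_symm : ∀ i j, r i j = r j i)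
    (hcov : ∀ i j, |cov[Y i, Y j; P]| ≤ r i j) (q : ℕ) :
    |hermiteMoment Y P fun _ => q| ≤ (4 * q).factorial *
      ((r 0 1 * r 2 3) ^ q + (r 0 2 * r 1 3) ^ q + (r 0 3 * r 1 2) ^ q) := by
  have hpow (i j k l : Fin 4) : 0 ≤ (r i j * r k l) ^ q :=
    pow_nonneg (mul_pos (hr_pos i j) (hr_pos k l)).le q
  have permuted (e : Fin 4 ≃ Fin 4)
      (h₁ : r (e 0) (e 2) * r (e 1) (e 3) ≤ r (e 0) (e 1) * r (e 2) (e 3))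
      (h₂ : r (e 0) (e 3) * r (e 1) (e 2) ≤ r (e 0) (e 1) * r (e 2) (e 3)) :
      |hermiteMoment Y P fun _ => q| ≤
        (4 * q).factorial * (r (e 0) (e 1) * r (e 2) (e 3)) ^ q := by
    rw [← hermiteMoment_const_comp_equiv Y P e]
    exact (hY.comp e).abs_hermiteMoment_const_le_of_dominant (r := fun i j => r (e i) (e j))
      (fun i j => hr_pos _ _) (fun i j => hr_symm _ _) (fun i j => hcov _ _) h₁ h₂ q
  have h₁ := permuted (Equiv.refl _)
  have h₂ := permuted (Equiv.swap 1 2)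
  have h₃ := permuted (Equiv.swap 1 3)
  simp only [Equiv.refl_apply, Equiv.swap_apply_def, Fin.reduceEq, if_true, if_false] at h₁ h₂ h₃
  rw [hr_symm 2 1] at h₂
  rw [hr_symm 3 1, hr_symm 2 1, hr_symm 3 2] at h₃
  have p₁ := hpow 0 1 2 3
  have p₂ := hpow 0 2 1 3
  have p₃ := hpow 0 3 1 2
  obtain ⟨h, h'⟩ | ⟨h, h'⟩ | ⟨h, h'⟩ :
      (r 0 2 * r 1 3 ≤ r 0 1 * r 2 3 ∧ r 0 3 * r 1 2 ≤ r 0 1 * r 2 3) ∨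
      (r 0 1 * r 2 3 ≤ r 0 2 * r 1 3 ∧ r 0 3 * r 1 2 ≤ r 0 2 * r 1 3) ∨
      (r 0 2 * r 1 3 ≤ r 0 3 * r 1 2 ∧ r 0 1 * r 2 3 ≤ r 0 3 * r 1 2) := by
    grind
  · exact (h₁ h h').trans (by gcongr; linarith)
  · exact (h₂ h h').trans (by gcongr; linarith)
  · exact (h₃ h h').trans (by gcongr; linarith)

theorem abs_hermiteMoment_const_le (hY : IsStdGaussianFamily Y P) (q : ℕ) :
    |hermiteMoment Y P fun _ => q| ≤ (4 * q).factorial *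
      (|cov[Y 0, Y 1; P] * cov[Y 2, Y 3; P]| ^ q + |cov[Y 0, Y 2; P] * cov[Y 1, Y 3; P]| ^ q
        + |cov[Y 0, Y 3; P] * cov[Y 1, Y 2; P]| ^ q) := by
  let ρ (i j : Fin 4) : ℝ := |cov[Y i, Y j; P]|
  let bound (δ : ℝ) : ℝ := (4 * q).factorial * (((ρ 0 1 + δ) * (ρ 2 3 + δ)) ^ q
    + ((ρ 0 2 + δ) * (ρ 1 3 + δ)) ^ q + ((ρ 0 3 + δ) * (ρ 1 2 + δ)) ^ q)
  have hbound : Tendsto bound (𝓝[>] 0) (𝓝 (bound 0)) :=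
    (show Continuous bound by fun_prop).continuousWithinAt
  have hle : |hermiteMoment Y P fun _ => q| ≤ bound 0 := by
    refine ge_of_tendsto hbound (eventually_mem_nhdsWithin.mono fun δ (hδ : 0 < δ) => ?_)
    exact hY.abs_hermiteMoment_const_le_of_pos (r := fun i j => ρ i j + δ)
      (fun i j => by positivity) (fun i j => by simp only [ρ, covariance_comm])
      (fun i j => by simp only [ρ]; linarith) q
  simpa [bound, ρ, abs_mul] using hle

theorem integral_sum_pow_four_le (hX : IsStdGaussianFamily X P) (q : ℕ) (s : Finset ι) :
    ∫ ω, (∑ i ∈ s, (hermiteReal q).eval (X i ω)) ^ 4 ∂P ≤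
      3 * (4 * q).factorial * (∑ i ∈ s, ∑ j ∈ s, |cov[X i, X j; P]| ^ q) ^ 2 := by
  let T := (s ×ˢ s) ×ˢ (s ×ˢ s)
  let e (z : (ι × ι) × (ι × ι)) : Fin 4 → ι := ![z.1.1, z.1.2, z.2.1, z.2.2]
  let ρ (i j : ι) : ℝ := |cov[X i, X j; P]| ^ q
  have hexpand (ω : Ω) : (∑ i ∈ s, (hermiteReal q).eval (X i ω)) ^ 4 =
      ∑ z ∈ T, ∏ a, (hermiteReal q).eval (X (e z a) ω) := by
    simp only [T, e, Finset.sum_product, Fin.prod_univ_four, Matrix.cons_val, ← Finset.mul_sum,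
      ← Finset.sum_mul]
    ring
  have hint (z : (ι × ι) × (ι × ι)) :
      Integrable (fun ω => ∏ a, (hermiteReal q).eval (X (e z a) ω)) P :=
    integrable_of_mem_finiteMoments
      (prod_eval_mem_finiteMoments (fun a => hX.mem_finiteMoments (e z a)) _ _)
  calc ∫ ω, (∑ i ∈ s, (hermiteReal q).eval (X i ω)) ^ 4 ∂P
      = ∑ z ∈ T, hermiteMoment (fun a => X (e z a)) P fun _ => q := by
        simp only [hexpand, integral_finsetSum T fun z _ => hint z, hermiteMoment]
    _ ≤ ∑ z ∈ T, (4 * q).factorial * (ρ z.1.1 z.1.2 * ρ z.2.1 z.2.2 +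
          ρ z.1.1 z.2.1 * ρ z.1.2 z.2.2 + ρ z.1.1 z.2.2 * ρ z.1.2 z.2.1) := by
        refine Finset.sum_le_sum fun z _ => (le_abs_self _).trans ?_
        simpa [ρ, e, abs_mul, mul_pow] using (hX.comp (e z)).abs_hermiteMoment_const_le q
    _ = 3 * (4 * q).factorial * (∑ i ∈ s, ∑ j ∈ s, ρ i j) ^ 2 := by
        rw [← Finset.mul_sum, sum_three_pairings]
        ring

end IsStdGaussianFamily

end GaussianFamily

section FractionalNoise

theorem exists_second_difference_eq {f f' f'' : ℝ → ℝ} {x h : ℝ} (hh : 0 < h)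
    (hf : ∀ y ∈ Set.Icc (x - h) (x + h), HasDerivAt f (f' y) y)
    (hf' : ∀ y ∈ Set.Icc (x - h) (x + h), HasDerivAt f' (f'' y) y) :
    ∃ y ∈ Set.Ioo (x - h) (x + h), f (x + h) + f (x - h) - 2 * f x = h ^ 2 * f'' y := by
  have hdiff : ∀ y ∈ Set.Icc (x - h) x,
      HasDerivAt (fun y => f (y + h) - f y) (f' (y + h) - f' y) y := fun y ⟨h₁, h₂⟩ =>
    ((hf _ ⟨by linarith, by linarith⟩).comp_add_const y h).sub (hf y ⟨h₁, by linarith⟩)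
  obtain ⟨ξ, ⟨hξ₁, hξ₂⟩, hξ⟩ := exists_hasDerivAt_eq_slope (fun y => f (y + h) - f y)
    (fun y => f' (y + h) - f' y) (show x - h < x by linarith)
    (HasDerivAt.continuousOn hdiff) fun y hy => hdiff y (Set.Ioo_subset_Icc_self hy)
  have hsub : Set.Icc ξ (ξ + h) ⊆ Set.Icc (x - h) (x + h) :=
    Set.Icc_subset_Icc hξ₁.le (by linarith)
  obtain ⟨y, ⟨hy₁, hy₂⟩, hy⟩ := exists_hasDerivAt_eq_slope f' f'' (show ξ < ξ + h by linarith)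
    (HasDerivAt.continuousOn fun y hy => hf' y (hsub hy))
    fun y hy => hf' y (hsub (Set.Ioo_subset_Icc_self hy))
  refine ⟨y, ⟨by linarith, by linarith⟩, ?_⟩
  rw [sub_add_cancel, sub_sub_cancel, eq_div_iff hh.ne'] at hξ
  rw [add_sub_cancel_left, eq_div_iff hh.ne'] at hy
  linear_combination -h * hy - hξ

theorem abs_rpow_second_difference_le {p x : ℝ} (hp : p ≤ 2) (hx : 1 < x) :
    |(x + 1) ^ p + (x - 1) ^ p - 2 * x ^ p| ≤ |p * (p - 1)| * (x - 1) ^ (p - 2) := by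
  have hderiv (r : ℝ) {y : ℝ} (hy : 0 < y) : HasDerivAt (fun y => y ^ r) (r * y ^ (r - 1)) y :=
    Real.hasDerivAt_rpow_const (Or.inl hy.ne')
  obtain ⟨y, ⟨hy, -⟩, h⟩ := exists_second_difference_eq (x := x) one_pos
    (fun y hy => hderiv p (by linarith [hy.1]))
    (fun y hy => (hderiv (p - 1) (by linarith [hy.1])).const_mul p)
  have hpow : y ^ (p - 2) ≤ (x - 1) ^ (p - 2) :=
    Real.rpow_le_rpow_of_nonpos (by linarith) hy.le (by linarith)
  rw [h, one_pow, one_mul, ← mul_assoc, abs_mul, show p - 1 - 1 = p - 2 by ring,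
    abs_of_nonneg (Real.rpow_nonneg (by linarith : 0 ≤ y) _)]
  gcongr

/-- The autocovariance of fractional Gaussian noise, the increments of a fractional Brownian
motion with Hurst parameter `H` over consecutive unit intervals. -/
noncomputable def fractionalNoiseCov (H : ℝ) (z : ℤ) : ℝ :=
  (|(z : ℝ) + 1| ^ (2 * H) + |(z : ℝ) - 1| ^ (2 * H) - 2 * |(z : ℝ)| ^ (2 * H)) / 2

theorem fractionalNoiseCov_zero {H : ℝ} (hH : H ≠ 0) : fractionalNoiseCov H 0 = 1 := by
  simp [fractionalNoiseCov, hH]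

theorem fractionalNoiseCov_neg (H : ℝ) (z : ℤ) :
    fractionalNoiseCov H (-z) = fractionalNoiseCov H z := by
  rw [fractionalNoiseCov, fractionalNoiseCov, Int.cast_neg, abs_neg, neg_add_eq_sub, abs_sub_comm,
    neg_sub_left, abs_neg, add_comm 1, add_comm (|(z : ℝ) - 1| ^ (2 * H))]

theorem abs_fractionalNoiseCov_le {H : ℝ} (hH : H ≤ 1) (m : ℕ) :
    |fractionalNoiseCov H (m + 2 : ℕ)| ≤
      |2 * H * (2 * H - 1)| * ((m : ℝ) + 1) ^ (2 * H - 2) := by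
  have h := abs_rpow_second_difference_le (p := 2 * H) (x := (m : ℝ) + 2) (by linarith)
    (by linarith [m.cast_nonneg (α := ℝ)])
  rw [show (m : ℝ) + 2 - 1 = m + 1 by ring] at h
  rw [fractionalNoiseCov, abs_div, abs_two]
  push_cast
  rw [show (m : ℝ) + 2 - 1 = m + 1 by ring, abs_of_nonneg (by positivity : 0 ≤ (m : ℝ) + 2 + 1),
    abs_of_nonneg (by positivity : 0 ≤ (m : ℝ) + 1),
    abs_of_nonneg (by positivity : 0 ≤ (m : ℝ) + 2)]
  exact (half_le_self (abs_nonneg _)).trans h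

theorem summable_abs_fractionalNoiseCov_pow {H : ℝ} {q : ℕ} (hq : q ≠ 0)
    (hH : H < 1 - 1 / (2 * q)) : Summable fun z : ℤ => |fractionalNoiseCov H z| ^ q := by
  have : (0 : ℝ) < q := by positivity
  have hH_le : H ≤ 1 := hH.le.trans (sub_le_self 1 (by positivity))
  have hexp : 1 < (2 - 2 * H) * q := by
    have : 1 / (2 * (q : ℝ)) < 1 - H := by linarith
    rw [div_lt_iff₀ (by positivity)] at this
    linarith
  have hmajorant : Summable fun m : ℕ =>
      (|2 * H * (2 * H - 1)| * ((m : ℝ) + 1) ^ (2 * H - 2)) ^ q := by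
    refine (((summable_nat_add_iff 1).2 (Real.summable_one_div_nat_rpow.2 hexp)).mul_left
      (|2 * H * (2 * H - 1)| ^ q)).congr fun m => ?_
    rw [mul_pow, ← Real.rpow_mul_natCast (by positivity), one_div,
      ← Real.rpow_neg (by positivity), Nat.cast_add_one, ← neg_mul, neg_sub]
  have hnat : Summable fun m : ℕ => |fractionalNoiseCov H m| ^ q :=
    (summable_nat_add_iff 2).1 <| hmajorant.of_nonneg_of_le (fun m => by positivity) fun m =>
      pow_le_pow_left₀ (abs_nonneg _) (abs_fractionalNoiseCov_le hH_le m) q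
  exact hnat.of_nat_of_neg (by simpa only [fractionalNoiseCov_neg] using hnat)

theorem sum_range_sum_range_sub_le {g : ℤ → ℝ} (hg : Summable g) (hg_nonneg : ∀ z, 0 ≤ g z)
    (n : ℕ) :
    ∑ k ∈ Finset.range n, ∑ l ∈ Finset.range n, g ((k : ℤ) - l) ≤ n * ∑' z, g z := by
  have hrow (k : ℕ) : ∑ l ∈ Finset.range n, g ((k : ℤ) - l) ≤ ∑' z, g z := by
    have hinj : Set.InjOn (fun l : ℕ => (k : ℤ) - l) (Finset.range n) := fun _ _ _ _ h =>
      Nat.cast_injective (sub_right_injective h)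
    rw [← Finset.sum_image (f := g) hinj]
    exact hg.sum_le_tsum _ fun z _ => hg_nonneg z
  simpa using Finset.sum_le_sum fun k (_ : k ∈ Finset.range n) => hrow k

end FractionalNoise

section FractionalBrownianMotion

theorem isGaussianProcess_of_forall_sum_map_eq_gaussianReal {Ω T : Type*} [MeasurableSpace Ω]
    {P : Measure Ω} {X : T → Ω → ℝ} (hX : ∀ t, Measurable (X t))
    (h : ∀ (I : Finset T) (c : I → ℝ), ∃ (m : ℝ) (v : NNReal),
      P.map (fun ω => ∑ i, c i * X i ω) = gaussianReal m v) :
    IsGaussianProcess X P := by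
  classical
  refine ⟨fun I => ⟨isGaussian_of_map_eq_gaussianReal fun L => ?_⟩⟩
  obtain ⟨m, v, hmv⟩ := h I fun i => L (Pi.single i 1)
  refine ⟨m, v, ?_⟩
  have hmeas : Measurable fun ω => I.restrict fun t => X t ω :=
    measurable_pi_lambda _ fun i => hX i
  rw [← hmv, Measure.map_map (by fun_prop) hmeas]
  congr 1
  ext ω
  have hL := (L : (I → ℝ) →ₗ[ℝ] ℝ).pi_apply_eq_sum_univ fun i => X i ω
  have hsingle (i : I) : (fun j => if i = j then (1 : ℝ) else 0) = Pi.single i 1 := by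
    ext j
    simp only [Pi.single_apply, eq_comm]
  simpa only [hsingle, ContinuousLinearMap.coe_coe, smul_eq_mul, mul_comm, Function.comp_apply,
    Finset.restrict_def] using hL

/-- The increment of `B` over the `k`-th interval of the regular partition of `[0, 1]` into `n`
intervals, rescaled to unit variance when `B` is a fractional Brownian motion with Hurst
parameter `H`. -/
noncomputable def scaledIncrement {Ω : Type*} (B : ℝ → Ω → ℝ) (H : ℝ) (n k : ℕ) (ω : Ω) : ℝ :=
  (n : ℝ) ^ H * (B (((k : ℝ) + 1) / n) ω - B ((k : ℝ) / n) ω)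

namespace IsFractionalBrownianMotion

variable {Ω : Type*} [MeasureSpace Ω] {B : ℝ → Ω → ℝ} {H : ℝ}

theorem isGaussianProcess (hB : IsFractionalBrownianMotion B H) :
    IsGaussianProcess (fun (t : NNReal) ω => B t ω) (ℙ : Measure Ω) := by
  refine isGaussianProcess_of_forall_sum_map_eq_gaussianReal (fun t => hB.measurable t)
    fun I c => ?_
  let e := (Fintype.equivFin I).symm
  obtain ⟨v, hv⟩ := hB.gaussian_fdd (Fintype.card I) (fun m => ((e m : NNReal) : ℝ))
    (fun m => NNReal.coe_nonneg _) (fun m => c (e m))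
  refine ⟨0, v, ?_⟩
  simp only [← e.sum_comp fun i => c i * B ((i : NNReal) : ℝ) _]
  exact hv

theorem integral_eq_zero (hB : IsFractionalBrownianMotion B H) {t : ℝ} (ht : 0 ≤ t) :
    ∫ ω, B t ω ∂(ℙ : Measure Ω) = 0 := by
  obtain ⟨v, hv⟩ := hB.gaussian_fdd 1 (fun _ => t) (fun _ => ht) (fun _ => 1)
  simp only [Finset.univ_unique, Finset.sum_singleton, one_mul] at hv
  rw [← integral_map (hB.measurable t).aemeasurable (f := fun x => x) (by fun_prop), hv,
    integral_id_gaussianReal]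

variable [IsProbabilityMeasure (ℙ : Measure Ω)]

theorem memLp_two (hB : IsFractionalBrownianMotion B H) {t : ℝ} (ht : 0 ≤ t) :
    MemLp (B t) 2 (ℙ : Measure Ω) :=
  mem_finiteMoments_of_hasGaussianLaw (hB.isGaussianProcess.hasGaussianLaw_eval ⟨t, ht⟩) 2

theorem covariance_eq (hB : IsFractionalBrownianMotion B H) {s t : ℝ} (hs : 0 ≤ s) (ht : 0 ≤ t) :
    cov[B s, B t] = (s ^ (2 * H) + t ^ (2 * H) - |t - s| ^ (2 * H)) / 2 := by
  rw [covariance_eq_sub (hB.memLp_two hs) (hB.memLp_two ht), hB.integral_eq_zero hs, zero_mul,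
    sub_zero]
  exact hB.covariance s t hs ht

theorem covariance_scaledIncrement (hB : IsFractionalBrownianMotion B H) {n : ℕ} (hn : n ≠ 0)
    (k l : ℕ) :
    cov[scaledIncrement B H n k, scaledIncrement B H n l] = fractionalNoiseCov H ((k : ℤ) - l) := by
  have hn_pos : (0 : ℝ) < n := by positivity
  have hrpow (a b : ℝ) : |a / n - b / n| ^ (2 * H) = |b - a| ^ (2 * H) / (n ^ H * n ^ H) := by
    rw [← sub_div, abs_div, abs_of_pos hn_pos, abs_sub_comm,
      Real.div_rpow (abs_nonneg _) hn_pos.le, two_mul, Real.rpow_add hn_pos]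
  have hL2 (a : ℕ) : MemLp (B (a / n)) 2 (ℙ : Measure Ω) := hB.memLp_two (by positivity)
  have hL2' (a : ℕ) : MemLp (B ((a + 1) / n)) 2 (ℙ : Measure Ω) := hB.memLp_two (by positivity)
  unfold scaledIncrement
  rw [covariance_const_mul_left, covariance_const_mul_right,
    covariance_fun_sub_fun_sub (hL2' k) (hL2 k) (hL2' l) (hL2 l),
    hB.covariance_eq (by positivity) (by positivity),
    hB.covariance_eq (by positivity) (by positivity),
    hB.covariance_eq (by positivity) (by positivity),
    hB.covariance_eq (by positivity) (by positivity), hrpow, hrpow, hrpow, hrpow,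
    add_sub_add_right_eq_sub, add_sub_right_comm (k : ℝ), sub_add_eq_sub_sub (k : ℝ),
    fractionalNoiseCov]
  push_cast
  have : (n : ℝ) ^ H ≠ 0 := by positivity
  field_simp
  ring

theorem isStdGaussianFamily_scaledIncrement (hB : IsFractionalBrownianMotion B H) (hH : H ≠ 0)
    {n : ℕ} (hn : n ≠ 0) : IsStdGaussianFamily (scaledIncrement B H n) (ℙ : Measure Ω) := by
  classical
  have hgauss : IsGaussianProcess (scaledIncrement B H n) (ℙ : Measure Ω) := by
    refine hB.isGaussianProcess.of_isGaussianProcess fun k => ?_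
    let t₁ : NNReal := ((k : NNReal) + 1) / n
    let t₀ : NNReal := (k : NNReal) / n
    exact ⟨{t₁, t₀}, ((n : ℝ) ^ H) • (ContinuousLinearMap.proj ⟨t₁, by simp⟩
      - ContinuousLinearMap.proj ⟨t₀, by simp⟩), fun ω => by simp [t₁, t₀, scaledIncrement]⟩
  refine ⟨hgauss, fun k => ⟨(hgauss.hasGaussianLaw_eval k).aemeasurable, ?_⟩⟩
  have hmean : ∫ ω, scaledIncrement B H n k ω ∂(ℙ : Measure Ω) = 0 := by
    have h₀ : (0 : ℝ) ≤ k / n := by positivity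
    have h₁ : (0 : ℝ) ≤ (k + 1) / n := by positivity
    unfold scaledIncrement
    rw [integral_const_mul, integral_sub ((hB.memLp_two h₁).integrable one_le_two)
      ((hB.memLp_two h₀).integrable one_le_two), hB.integral_eq_zero h₁, hB.integral_eq_zero h₀,
      sub_zero, mul_zero]
  have hvar : Var[scaledIncrement B H n k] = 1 := by
    rw [← covariance_self (hgauss.hasGaussianLaw_eval k).aemeasurable,
      hB.covariance_scaledIncrement hn, sub_self, fractionalNoiseCov_zero hH]
  rw [(hgauss.hasGaussianLaw_eval k).map_eq_gaussianReal, hmean, hvar, Real.toNNReal_one]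

end IsFractionalBrownianMotion

end FractionalBrownianMotion

section HermiteVariation

variable {Ω : Type*} [MeasureSpace Ω] {B : ℝ → Ω → ℝ} {H : ℝ}

theorem hermiteVariation_eq_sum_eval (B : ℝ → Ω → ℝ) (H : ℝ) (q n : ℕ) :
    hermiteVariation B H q n =
      fun ω => ∑ k ∈ Finset.range n, (hermiteReal q).eval (scaledIncrement B H n k ω) := by
  simp only [funext_iff, hermiteVariation, eval_hermiteReal, scaledIncrement, implies_true]

namespace IsFractionalBrownianMotion

theorem measurable_hermiteVariation (hB : IsFractionalBrownianMotion B H) (q n : ℕ) :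
    Measurable (hermiteVariation B H q n) := by
  rw [hermiteVariation_eq_sum_eval]
  exact Finset.measurable_fun_sum _ fun k _ => (hermiteReal q).continuous.measurable.comp
    (((hB.measurable _).sub (hB.measurable _)).const_mul _)

variable [IsProbabilityMeasure (ℙ : Measure Ω)]

theorem integrable_hermiteVariation_pow_four (hB : IsFractionalBrownianMotion B H) (hH : H ≠ 0)
    (q n : ℕ) : Integrable (fun ω => hermiteVariation B H q n ω ^ 4) (ℙ : Measure Ω) := by
  obtain rfl | hn := eq_or_ne n 0
  · simp [hermiteVariation]
  have hmem : hermiteVariation B H q n ∈ finiteMoments (ℙ : Measure Ω) := by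
    rw [hermiteVariation_eq_sum_eval]
    simpa only [Finset.sum_fn] using Subalgebra.sum_mem _ fun k _ => eval_comp_mem_finiteMoments
      ((hB.isStdGaussianFamily_scaledIncrement hH hn).mem_finiteMoments k) (hermiteReal q)
  exact integrable_of_mem_finiteMoments (pow_mem hmem 4)

theorem integral_hermiteVariation_pow_four_le (hB : IsFractionalBrownianMotion B H) (hH : H ≠ 0)
    {q : ℕ} (hq : q ≠ 0) (hHq : H < 1 - 1 / (2 * q)) (n : ℕ) :
    ∫ ω, hermiteVariation B H q n ω ^ 4 ∂(ℙ : Measure Ω) ≤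
      3 * (4 * q).factorial * (∑' z, |fractionalNoiseCov H z| ^ q) ^ 2 * n ^ 2 := by
  obtain rfl | hn := eq_or_ne n 0
  · simp [hermiteVariation]
  have h := (hB.isStdGaussianFamily_scaledIncrement hH hn).integral_sum_pow_four_le q
    (Finset.range n)
  simp only [hB.covariance_scaledIncrement hn] at h
  have hsum := sum_range_sum_range_sub_le (summable_abs_fractionalNoiseCov_pow hq hHq)
    (fun z => by positivity) n
  rw [hermiteVariation_eq_sum_eval]
  calc _ ≤ _ := h
    _ ≤ 3 * (4 * q).factorial * (n * ∑' z, |fractionalNoiseCov H z| ^ q) ^ 2 := by gcongr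
    _ = _ := by ring

end IsFractionalBrownianMotion

end HermiteVariation

section RiemannSums

open Set

variable {E : Type*} [NormedAddCommGroup E] [NormedSpace ℝ E] [CompleteSpace E]

theorem setIntegral_comp_floor_div {h : ℝ} (hh : 0 < h) {f : ℕ → E}
    (hf : IntegrableOn (fun t : ℝ => f ⌊t / h⌋₊) (Ioi 0)) :
    ∫ t in Ioi (0 : ℝ), f ⌊t / h⌋₊ = h • ∑' n, f n := by
  have hfloor : Measurable fun t : ℝ => ⌊t / h⌋₊ := by fun_prop
  have hcell (n : ℕ) : (volume.restrict (Ioi 0)).real ((fun t : ℝ => ⌊t / h⌋₊) ⁻¹' {n}) = h := by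
    have hIco : (fun t : ℝ => ⌊t / h⌋₊) ⁻¹' {n} ∩ Ici 0 = Ico (n * h) ((n + 1) * h) := by
      ext t
      refine ⟨fun ⟨hn, ht⟩ => ?_, fun ht => ?_⟩
      · rwa [mem_preimage, mem_singleton_iff, Nat.floor_eq_iff (div_nonneg ht hh.le),
          le_div_iff₀ hh, div_lt_iff₀ hh] at hn
      · have ht₀ : 0 ≤ t := le_trans (by positivity) ht.1
        refine ⟨?_, ht₀⟩
        rwa [mem_preimage, mem_singleton_iff, Nat.floor_eq_iff (div_nonneg ht₀ hh.le),
          le_div_iff₀ hh, div_lt_iff₀ hh]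
    rw [Measure.restrict_congr_set Ioi_ae_eq_Ici,
      measureReal_restrict_apply (hfloor (measurableSet_singleton n)), hIco, Real.volume_real_Ico,
      ← sub_mul, add_sub_cancel_left, one_mul, max_eq_left hh.le]
  have hf' : Integrable f ((volume.restrict (Ioi 0)).map fun t : ℝ => ⌊t / h⌋₊) :=
    (integrable_map_measure .of_discrete hfloor.aemeasurable).2 hf
  rw [← integral_map hfloor.aemeasurable .of_discrete, integral_countable hf', ← tsum_const_smul'']
  simp only [map_measureReal_apply hfloor (measurableSet_singleton _), hcell]

theorem tendsto_smul_tsum_of_dominated {f : ℝ → ℕ → E} {F : ℝ → E} {g : ℝ → ℝ}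
    (hg : AntitoneOn g (Ioi 0)) (hg_int : IntegrableOn g (Ioi 0))
    (hfg : ∀ h > 0, ∀ n : ℕ, ‖f h n‖ ≤ g (h * (n + 1)))
    (hlim : ∀ t > 0, Tendsto (fun h => f h ⌊t / h⌋₊) (𝓝[>] 0) (𝓝 (F t))) :
    Tendsto (fun h => h • ∑' n, f h n) (𝓝[>] 0) (𝓝 (∫ t in Ioi 0, F t)) := by
  have hmeas (h : ℝ) : AEStronglyMeasurable (fun t => f h ⌊t / h⌋₊) (volume.restrict (Ioi 0)) :=
    ((StronglyMeasurable.of_discrete (f := f h)).comp_measurable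
      (by fun_prop : Measurable fun t : ℝ => ⌊t / h⌋₊)).aestronglyMeasurable
  have hbound (h : ℝ) (hh : 0 < h) : ∀ᵐ t ∂volume.restrict (Ioi 0), ‖f h ⌊t / h⌋₊‖ ≤ g t := by
    refine (ae_restrict_iff' measurableSet_Ioi).2 (ae_of_all _ fun t ht => ?_)
    refine (hfg h hh _).trans (hg ht (mem_Ioi.2 (by positivity)) ?_)
    have := (div_lt_iff₀' hh).1 (Nat.lt_floor_add_one (t / h))
    exact this.le
  have h_tendsto := tendsto_integral_filter_of_dominated_convergence (l := 𝓝[>] (0 : ℝ)) g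
    (Eventually.of_forall hmeas) (eventually_mem_nhdsWithin.mono hbound) hg_int
    ((ae_restrict_iff' measurableSet_Ioi).2 (ae_of_all _ hlim))
  refine h_tendsto.congr' (eventually_mem_nhdsWithin.mono fun h hh => ?_)
  exact setIntegral_comp_floor_div hh (hg_int.mono' (hmeas h) (hbound h hh))

end RiemannSums

section UniformConvergence

variable {ι : Type*} {l : Filter ι} {F : ι → ℝ → ℝ} {G : ℝ → ℝ}

theorem tendstoLocallyUniformly_of_monotone (hF : ∀ i, Monotone (F i)) (hG : Continuous G)
    (hlim : ∀ x, Tendsto (fun i => F i x) l (𝓝 (G x))) : TendstoLocallyUniformly F G l := by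
  rw [Metric.tendstoLocallyUniformly_iff]
  intro ε hε x
  obtain ⟨δ, hδ, hGδ⟩ := Metric.continuousAt_iff.1 (hG.continuousAt (x := x)) (ε / 4) (by linarith)
  have hG_near (y : ℝ) (hy : y ∈ Set.Icc (x - δ / 2) (x + δ / 2)) : |G y - G x| < ε / 4 :=
    hGδ (by rw [Real.dist_eq, abs_lt]; constructor <;> linarith [hy.1, hy.2])
  have hleft := hG_near (x - δ / 2) ⟨le_rfl, by linarith⟩
  have hright := hG_near (x + δ / 2) ⟨by linarith, le_rfl⟩
  refine ⟨Set.Icc (x - δ / 2) (x + δ / 2), Icc_mem_nhds (by linarith) (by linarith), ?_⟩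
  filter_upwards [Metric.tendsto_nhds.1 (hlim (x - δ / 2)) (ε / 4) (by linarith),
    Metric.tendsto_nhds.1 (hlim (x + δ / 2)) (ε / 4) (by linarith)] with i hi_left hi_right y hy
  have hy_near := hG_near y hy
  rw [Real.dist_eq, abs_lt] at hi_left hi_right ⊢
  rw [abs_lt] at hleft hright hy_near
  have := hF i hy.1
  have := hF i hy.2
  constructor <;> linarith

theorem tendstoUniformly_of_monotone (hF : ∀ i, Monotone (F i)) (hG : Continuous G)
    (hlim : ∀ x, Tendsto (fun i => F i x) l (𝓝 (G x))) {a b : ℝ} (ha : ∀ i x, a ≤ F i x)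
    (hb : ∀ i x, F i x ≤ b) (hGa : Tendsto G atBot (𝓝 a)) (hGb : Tendsto G atTop (𝓝 b)) :
    TendstoUniformly F G l := by
  obtain rfl | hl := l.eq_or_neBot
  · exact fun _ _ => eventually_bot
  have hG_mono : Monotone G := fun x y hxy =>
    le_of_tendsto_of_tendsto' (hlim x) (hlim y) fun i => hF i hxy
  have hG_mem (x : ℝ) : a ≤ G x ∧ G x ≤ b :=
    ⟨ge_of_tendsto' (hlim x) fun i => ha i x, le_of_tendsto' (hlim x) fun i => hb i x⟩
  rw [Metric.tendstoUniformly_iff]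
  intro ε hε
  obtain ⟨L, hL⟩ := (hGa.eventually (gt_mem_nhds (show a < a + ε / 2 by linarith))).exists
  obtain ⟨R, hR⟩ := (hGb.eventually (lt_mem_nhds (show b - ε / 2 < b by linarith))).exists
  have hmid : ∀ᶠ i in l, ∀ x ∈ Set.Icc L R, dist (G x) (F i x) < ε :=
    Metric.tendstoUniformlyOn_iff.1
      ((tendstoLocallyUniformlyOn_iff_tendstoUniformlyOn_of_compact isCompact_Icc).1
        (tendstoLocallyUniformly_of_monotone hF hG hlim).tendstoLocallyUniformlyOn) ε hε
  filter_upwards [hmid, Metric.tendsto_nhds.1 (hlim L) (ε / 2) (by linarith),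
    Metric.tendsto_nhds.1 (hlim R) (ε / 2) (by linarith)] with i hi hiL hiR x
  rw [Real.dist_eq, abs_lt] at hiL hiR
  obtain hxL | hxL := lt_or_ge x L
  · have := hF i hxL.le
    have := hG_mono hxL.le
    rw [Real.dist_eq, abs_lt]
    constructor <;> linarith [ha i x, hG_mem x]
  obtain hxR | hxR := lt_or_ge R x
  · have := hF i hxR.le
    have := hG_mono hxR.le
    rw [Real.dist_eq, abs_lt]
    constructor <;> linarith [hb i x, hG_mem x]
  exact hi x ⟨hxL, hxR⟩

end UniformConvergence

section Tails

section CDF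

variable {ι : Type*} {l : Filter ι} {μs : ι → ProbabilityMeasure ℝ} {μ : ProbabilityMeasure ℝ}

theorem continuous_cdf (μ : Measure ℝ) [IsProbabilityMeasure μ] [NullSingletonClass μ] :
    Continuous (cdf μ) := by
  refine continuous_iff_continuousAt.2 fun x => ?_
  have hjump : ENNReal.ofReal (cdf μ x - Function.leftLim (cdf μ) x) = 0 := by
    rw [← StieltjesFunction.measure_singleton, measure_cdf, measure_singleton]
  rw [(monotone_cdf μ).continuousAt_iff_leftLim_eq_rightLim, StieltjesFunction.rightLim_eq]
  exact le_antisymm ((monotone_cdf μ).leftLim_le le_rfl)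
    (sub_nonpos.1 (ENNReal.ofReal_eq_zero.1 hjump))

theorem tendstoUniformly_cdf [NullSingletonClass (μ : Measure ℝ)] (h : Tendsto μs l (𝓝 μ)) :
    TendstoUniformly (fun i => cdf (μs i : Measure ℝ)) (cdf (μ : Measure ℝ)) l := by
  have hlim (x : ℝ) :
      Tendsto (fun i => cdf (μs i : Measure ℝ) x) l (𝓝 (cdf (μ : Measure ℝ) x)) := by
    simp only [cdf_eq_real, Measure.real]
    refine (ENNReal.tendsto_toReal (measure_ne_top _ _)).comp
      (ProbabilityMeasure.tendsto_measure_of_null_frontier_of_tendsto' h ?_)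
    exact measure_mono_null (frontier_Iic_subset x) (measure_singleton x)
  exact tendstoUniformly_of_monotone (fun i => monotone_cdf _) (continuous_cdf _) hlim
    (fun i => cdf_nonneg _) (fun i => cdf_le_one _) (tendsto_cdf_atBot _) (tendsto_cdf_atTop _)

end CDF

theorem measureReal_lt_eq_one_sub_cdf_map {Ω : Type*} [MeasurableSpace Ω] {P : Measure Ω}
    [IsProbabilityMeasure P] {X : Ω → ℝ} (hX : AEMeasurable X P) (t : ℝ) :
    P.real {ω | t < X ω} = 1 - cdf (P.map X) t := by
  have := Measure.isProbabilityMeasure_map hX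
  rw [cdf_eq_real, ← probReal_compl_eq_one_sub measurableSet_Iic, Set.compl_Iic,
    map_measureReal_apply_of_aemeasurable hX measurableSet_Ioi]
  rfl

theorem nullSingletonClass_map_abs (μ : Measure ℝ) [NullSingletonClass μ] :
    NullSingletonClass (μ.map abs) := by
  refine ⟨fun x => ?_⟩
  rw [Measure.map_apply measurable_abs (measurableSet_singleton x)]
  refine measure_mono_null (t := {x, -x}) (fun y hy => ?_) ((Set.toFinite _).measure_zero μ)
  exact eq_or_eq_neg_of_abs_eq hy

section ConvergenceInDistribution

variable {ι Ω' : Type*} {Ω : ι → Type*} [∀ i, MeasurableSpace (Ω i)] [MeasurableSpace Ω']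
  {P : ∀ i, Measure (Ω i)} [∀ i, IsProbabilityMeasure (P i)] {P' : Measure Ω'}
  [IsProbabilityMeasure P'] {X : ∀ i, Ω i → ℝ} {Y : Ω' → ℝ} {l : Filter ι}
  [NullSingletonClass (P'.map Y)]

theorem tendstoUniformly_measureReal_lt (h : MeasureTheory.TendstoInDistribution X l Y P P') :
    TendstoUniformly (fun i t => (P i).real {ω | t < X i ω}) (fun t => P'.real {ω | t < Y ω})
      l := by
  let law : ProbabilityMeasure ℝ :=
    ⟨P'.map Y, Measure.isProbabilityMeasure_map h.aemeasurable_limit⟩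
  have : NullSingletonClass (law : Measure ℝ) := ‹NullSingletonClass (P'.map Y)›
  have hcdf := Metric.tendstoUniformly_iff.1 (tendstoUniformly_cdf (μ := law) h.tendsto)
  refine Metric.tendstoUniformly_iff.2 fun ε hε => (hcdf ε hε).mono fun i hi t => ?_
  rw [measureReal_lt_eq_one_sub_cdf_map (h.forall_aemeasurable i),
    measureReal_lt_eq_one_sub_cdf_map h.aemeasurable_limit, dist_sub_left]
  exact hi t

theorem tendstoUniformly_measureReal_lt_abs
    (h : MeasureTheory.TendstoInDistribution X l Y P P') :
    TendstoUniformly (fun i t => (P i).real {ω | t < |X i ω|}) (fun t => P'.real {ω | t < |Y ω|})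
      l := by
  have : NullSingletonClass (P'.map (abs ∘ Y)) := by
    rw [← AEMeasurable.map_map_of_aemeasurable measurable_abs.aemeasurable h.aemeasurable_limit]
    exact nullSingletonClass_map_abs _
  exact tendstoUniformly_measureReal_lt (Y := abs ∘ Y) (h.continuous_comp continuous_abs)

end ConvergenceInDistribution

theorem tendstoInDistribution_of_tendsto_integral {Ω : Type*} [MeasureSpace Ω]
    [IsProbabilityMeasure (ℙ : Measure Ω)] {Z : ℕ → Ω → ℝ} {N : Ω → ℝ}
    (hZ : ∀ n, AEMeasurable (Z n) (ℙ : Measure Ω)) (hN : AEMeasurable N (ℙ : Measure Ω))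
    (h : _root_.TendstoInDistribution Z (Measure.map N ℙ)) :
    MeasureTheory.TendstoInDistribution Z atTop N (fun _ => (ℙ : Measure Ω)) ℙ := by
  refine ⟨hZ, hN, ProbabilityMeasure.tendsto_iff_forall_integral_tendsto.2 fun f =>
    (h f).congr fun n => ?_⟩
  exact (integral_map (hZ n) f.continuous.aestronglyMeasurable).symm

theorem measureReal_lt_abs_le {Ω : Type*} [MeasurableSpace Ω] {P : Measure Ω}
    [IsProbabilityMeasure P] {X : Ω → ℝ} (hX : Integrable (fun ω => X ω ^ 4) P) {t : ℝ}
    (ht : 0 ≤ t) :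
    P.real {ω | t < |X ω|} ≤ (1 + ∫ ω, X ω ^ 4 ∂P) / (1 + t ^ 4) := by
  have hmarkov := mul_meas_ge_le_integral_of_nonneg (μ := P)
    (ae_of_all _ fun ω => (by positivity : 0 ≤ 1 + X ω ^ 4)) ((integrable_const 1).add hX)
    (1 + t ^ 4)
  rw [integral_add (integrable_const 1) hX, integral_const, probReal_univ, one_smul] at hmarkov
  rw [le_div_iff₀' (by positivity)]
  refine (mul_le_mul_of_nonneg_left (measureReal_mono fun ω hω => ?_)
    (by positivity)).trans hmarkov
  have hpow : t ^ 4 ≤ |X ω| ^ 4 := pow_le_pow_left₀ ht (le_of_lt hω) 4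
  rw [Even.pow_abs (by decide)] at hpow
  exact add_le_add_right hpow 1

theorem tendsto_sq_mul_tsum_tail_sub {T : ℕ → ℝ → ℝ} {S g : ℝ → ℝ}
    (hTS : TendstoUniformly T S atTop) (hg : AntitoneOn g (Set.Ioi 0))
    (hg_int : IntegrableOn g (Set.Ioi 0)) (hT : ∀ n, ∀ t > 0, |T n t| ≤ g (t ^ 2)) :
    Tendsto (fun a => a ^ 2 * ∑' n : ℕ, (T (n + 1) (a * √(n + 1)) - S (a * √(n + 1))))
      (𝓝[>] 0) (𝓝 0) := by
  have hS (t : ℝ) (ht : 0 < t) : |S t| ≤ g (t ^ 2) :=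
    le_of_tendsto' ((hTS.tendsto_at t).abs) fun n => hT n t ht
  have hriemann : Tendsto
      (fun h => h • ∑' n : ℕ, (T (n + 1) √(h * (n + 1)) - S √(h * (n + 1)))) (𝓝[>] 0)
      (𝓝 (∫ _ in Set.Ioi (0 : ℝ), (0 : ℝ))) := by
    refine tendsto_smul_tsum_of_dominated (g := fun t => 2 * g t)
      (fun s hs t ht hst => mul_le_mul_of_nonneg_left (hg hs ht hst) two_pos.le)
      (hg_int.const_mul 2) (fun h hh n => ?_) fun t ht => ?_
    · have hpos : 0 < h * (n + 1) := by positivity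
      have hTn := hT (n + 1) √(h * (n + 1)) (Real.sqrt_pos.2 hpos)
      have hSn := hS √(h * (n + 1)) (Real.sqrt_pos.2 hpos)
      rw [Real.sq_sqrt hpos.le] at hTn hSn
      exact (norm_sub_le _ _).trans (by rw [Real.norm_eq_abs, Real.norm_eq_abs]; linarith)
    · have hfloor : Tendsto (fun h : ℝ => ⌊t / h⌋₊ + 1) (𝓝[>] 0) atTop :=
        (tendsto_add_atTop_nat 1).comp (tendsto_nat_floor_atTop.comp
          (tendsto_inv_nhdsGT_zero.const_mul_atTop ht))
      rw [Metric.tendsto_nhds]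
      intro ε hε
      filter_upwards [hfloor.eventually (Metric.tendstoUniformly_iff.1 hTS ε hε)] with h hh
      rw [dist_zero_right, ← dist_eq_norm, dist_comm]
      exact hh _
  rw [integral_zero] at hriemann
  have hsq : Tendsto (fun a : ℝ => a ^ 2) (𝓝[>] 0) (𝓝[>] 0) := by
    refine tendsto_nhdsWithin_iff.2 ⟨?_, eventually_mem_nhdsWithin.mono fun a ha => ?_⟩
    · exact ((continuous_pow 2).tendsto' 0 0 (by simp)).mono_left nhdsWithin_le_nhds
    · exact pow_pos (Set.mem_Ioi.1 ha) 2
  refine (hriemann.comp hsq).congr' (eventually_mem_nhdsWithin.mono fun a ha => ?_)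
  simp only [Function.comp_apply, smul_eq_mul, Real.sqrt_mul (sq_nonneg a),
    Real.sqrt_sq (le_of_lt (Set.mem_Ioi.1 ha))]

end Tails

theorem IsFractionalBrownianMotion.exists_measureReal_lt_abs_hermiteVariation_div_sqrt_le
    {Ω : Type*} [MeasureSpace Ω] [IsProbabilityMeasure (ℙ : Measure Ω)] {B : ℝ → Ω → ℝ} {H : ℝ}
    (hB : IsFractionalBrownianMotion B H) (hH : H ≠ 0) {q : ℕ} (hq : q ≠ 0)
    (hHq : H < 1 - 1 / (2 * q)) (c : ℝ) :
    ∃ C, 0 ≤ C ∧ ∀ n : ℕ, ∀ t ≥ 0,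
      (ℙ : Measure Ω).real {ω | t < |hermiteVariation B H q n ω / (c * √n)|} ≤
        C / (1 + t ^ 4) := by
  set K := 3 * (4 * q).factorial * (∑' z, |fractionalNoiseCov H z| ^ q) ^ 2
  refine ⟨1 + K / c ^ 4, by positivity, fun n t ht => ?_⟩
  have hpow (x : ℝ) : (x / (c * √n)) ^ 4 = x ^ 4 / (c ^ 4 * n ^ 2) := by
    rw [div_pow, mul_pow, show √(n : ℝ) ^ 4 = (√n ^ 2) ^ 2 by ring, Real.sq_sqrt n.cast_nonneg]
  have hmoment :
      ∫ ω, (hermiteVariation B H q n ω / (c * √n)) ^ 4 ∂(ℙ : Measure Ω) ≤ K / c ^ 4 := by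
    simp only [hpow]
    rw [integral_div]
    calc _ ≤ K * n ^ 2 / (c ^ 4 * n ^ 2) := by
          gcongr
          exact hB.integral_hermiteVariation_pow_four_le hH hq hHq n
      _ = K / c ^ 4 * (n ^ 2 / n ^ 2) := mul_div_mul_comm ..
      _ ≤ K / c ^ 4 := mul_le_of_le_one_right (by positivity) (div_self_le_one _)
  have hint := (hB.integrable_hermiteVariation_pow_four hH q n).div_const (c ^ 4 * n ^ 2)
  simp only [← hpow] at hint
  refine (measureReal_lt_abs_le hint ht).trans ?_
  gcongr

theorem stmt_10 {Ω : Type*} [MeasureSpace Ω] [IsProbabilityMeasure (ℙ : Measure Ω)]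
    (q : ℕ) (hq : 2 ≤ q) (H : ℝ) (hH0 : 0 < H) (hH1 : H < 1 - 1 / (2 * q))
    (B : ℝ → Ω → ℝ) (hB : IsFractionalBrownianMotion B H)
    (c₁ : ℝ) (hc₁ : 0 < c₁)
    (hconv : TendstoInDistribution
      (fun n ω => hermiteVariation B H q n ω / (c₁ * Real.sqrt n)) (gaussianReal 0 1))
    (N : Ω → ℝ) (hN : Measure.map N (ℙ : Measure Ω) = gaussianReal 0 1)
    (c : ℝ) (hc : 0 < c) :
    Tendsto
      (fun ε : ℝ =>
        (c * ε) ^ 2 *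
          ∑' n : ℕ,
            ((ℙ {ω | c * ε * Real.sqrt ((n : ℝ) + 1) <
                |hermiteVariation B H q (n + 1) ω / (c₁ * Real.sqrt ((n : ℝ) + 1))|}).toReal -
              (ℙ {ω | c * ε * Real.sqrt ((n : ℝ) + 1) < |N ω|}).toReal))
      (𝓝[>] 0) (𝓝 0) := by
  have hN_meas : AEMeasurable N (ℙ : Measure Ω) :=
    AEMeasurable.of_map_ne_zero (hN ▸ IsProbabilityMeasure.ne_zero _)
  have : NullSingletonClass (Measure.map N (ℙ : Measure Ω)) :=
    hN ▸ nullSingletonClass_gaussianReal one_ne_zero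
  have hunif := tendstoUniformly_measureReal_lt_abs (tendstoInDistribution_of_tendsto_integral
    (fun n => ((hB.measurable_hermiteVariation q n).div_const _).aemeasurable) hN_meas
    (hN ▸ hconv))
  obtain ⟨C, hC, htail⟩ := hB.exists_measureReal_lt_abs_hermiteVariation_div_sqrt_le hH0.ne'
    (by lia) hH1 c₁
  have hlim := tendsto_sq_mul_tsum_tail_sub (g := fun x => C * (1 + x ^ 2)⁻¹) hunif
    (fun s hs t _ hst => ?_) (integrable_inv_one_add_sq.const_mul C).integrableOn
    (fun n t ht => ?_)
  · have hscale : Tendsto (fun ε : ℝ => c * ε) (𝓝[>] 0) (𝓝[>] 0) := by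
      simpa using TendstoNhdsWithinIoi.const_mul hc (tendsto_id (x := 𝓝[>] (0 : ℝ)))
    simpa only [Function.comp_def, Measure.real, Nat.cast_add_one] using hlim.comp hscale
  · have : 0 < s := hs
    beta_reduce
    gcongr
  · rw [abs_of_nonneg measureReal_nonneg, ← div_eq_mul_inv, ← pow_mul]
    exact htail n t ht.le
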